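/- arXiv:2311.06387 — 2 statements merged into one kernel-verified Lean document; each statement's English description precedes it below -/
import Mathlib

section
/- Let n ≥ 1 and let ≺ be an irreflexive, transitive relation on ±[n]. Then there exists a C_n-signed poset Q ⊆ Φ_{C_n} such that for all a, b ∈ ±[n] one has a ≺ b if and only if v(a) − v(b) ∈ Q, precisely when ≺ satisfies the following two conditions: (i) for all a, b ∈ ±[n], if a ≺ b then −b ≺ −a; and (ii) for all a, b ∈ ±[n], if a ≺ −a and b ≺ −b then a ≺ −b and b ≺ −a. -/
open scoped Classical

noncomputable section

/-- Signed index set `±[n]`: `(true, i)` represents `+i`, `(false, i)` represents `-i`. -/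
abbrev SIdx (n : ℕ) := Bool × Fin n

/-- Negation `a ↦ -a` on `±[n]`. -/
def negS {n : ℕ} (a : SIdx n) : SIdx n := (!a.1, a.2)

/-- Standard basis vector `e_i` of `ℝ^n`. -/
def stdB (n : ℕ) (i : Fin n) : Fin n → ℝ := Pi.single i 1

/-- `rsgn true = 1`, `rsgn false = -1`. -/
def rsgn (s : Bool) : ℝ := if s then 1 else -1

/-- `v(a)` for `a ∈ ±[n]`: `v(+i) = e_i`, `v(-i) = -e_i`. -/
def vS {n : ℕ} (a : SIdx n) : Fin n → ℝ := rsgn a.1 • stdB n a.2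

/-- `v` on `±[n] ∪ {0}` (with `none` playing the role of `0`). -/
def vO {n : ℕ} : Option (SIdx n) → (Fin n → ℝ)
  | none => 0
  | some a => vS a

/-- Negation on `±[n] ∪ {0}`, fixing `0`. -/
def negO {n : ℕ} : Option (SIdx n) → Option (SIdx n)
  | none => none
  | some a => some (negS a)

/-- Standard inner product on `ℝ^n`. -/
def dotR {n : ℕ} (x y : Fin n → ℝ) : ℝ := ∑ i, x i * y i

/-- The type `B_n` root system `Φ_{B_n}`. -/
def BnRoots (n : ℕ) : Set (Fin n → ℝ) :=
  {α | (∃ i j : Fin n, i < j ∧ ∃ s t : Bool, α = rsgn s • stdB n i + rsgn t • stdB n j) ∨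
    ∃ i : Fin n, ∃ s : Bool, α = rsgn s • stdB n i}

/-- The positive roots `Φ⁺_{B_n}`. -/
def BnPos (n : ℕ) : Set (Fin n → ℝ) :=
  {α | (∃ i j : Fin n, i < j ∧ ∃ t : Bool, α = stdB n i + rsgn t • stdB n j) ∨
    ∃ i : Fin n, α = stdB n i}

/-- The type `C_n` root system `Φ_{C_n}`. -/
def CnRoots (n : ℕ) : Set (Fin n → ℝ) :=
  {α | (∃ i j : Fin n, i < j ∧ ∃ s t : Bool, α = rsgn s • stdB n i + rsgn t • stdB n j) ∨
    ∃ i : Fin n, ∃ s : Bool, α = (2 * rsgn s) • stdB n i}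

/-- Nonnegative real linear combinations of elements of `S`. -/
def nnSpan {n : ℕ} (S : Set (Fin n → ℝ)) : Set (Fin n → ℝ) :=
  {x | ∃ (r : ℕ) (c : Fin r → ℝ) (β : Fin r → (Fin n → ℝ)),
    (∀ m, 0 ≤ c m) ∧ (∀ m, β m ∈ S) ∧ x = ∑ m, c m • β m}

/-- A signed poset: a subset of `Φ_{B_n}`, antisymmetric and closed under positive
linear combinations remaining in `Φ_{B_n}`. -/
def IsSignedPoset (n : ℕ) (P : Set (Fin n → ℝ)) : Prop :=
  P ⊆ BnRoots n ∧ (∀ α ∈ P, -α ∉ P) ∧ ∀ α ∈ BnRoots n, α ∈ nnSpan P → α ∈ P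

/-- A `C_n`-signed poset. -/
def IsCnSignedPoset (n : ℕ) (Q : Set (Fin n → ℝ)) : Prop :=
  Q ⊆ CnRoots n ∧ (∀ α ∈ Q, -α ∉ Q) ∧ ∀ α ∈ CnRoots n, α ∈ nnSpan Q → α ∈ Q

/-- The root cone `K^rt_P`. -/
def rootCone {n : ℕ} (P : Set (Fin n → ℝ)) : Set (Fin n → ℝ) := nnSpan P

/-- The weight cone `K^wt_P`. -/
def weightCone {n : ℕ} (P : Set (Fin n → ℝ)) : Set (Fin n → ℝ) :=
  {f | ∀ α ∈ P, 0 ≤ dotR f α}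

/-- The Fischer (strict) order on `±[n] ∪ {0}`:
`a < b` iff `v(a) - v(b) ∈ P`, or (`b = -a ≠ 0` and `v(a) ∈ P`). -/
def fLT {n : ℕ} (P : Set (Fin n → ℝ)) (a b : Option (SIdx n)) : Prop :=
  vO a - vO b ∈ P ∨ (a ≠ none ∧ b = negO a ∧ vO a ∈ P)

/-- A subset of `±[n]` is isotropic if it contains no pair `{i, -i}`. -/
def Isotropic {n : ℕ} (J : Finset (SIdx n)) : Prop :=
  ∀ i : Fin n, ¬((true, i) ∈ J ∧ (false, i) ∈ J)

/-- Signed characteristic vector of a subset of `±[n]`. -/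
def chiF {n : ℕ} (J : Finset (SIdx n)) : Fin n → ℝ := fun i =>
  if (true, i) ∈ J then 1 else if (false, i) ∈ J then -1 else 0

/-- `J` is an ideal of the signed poset `P`. -/
def IsIdeal {n : ℕ} (P : Set (Fin n → ℝ)) (J : Finset (SIdx n)) : Prop :=
  Isotropic J ∧ ∀ α ∈ P, 0 ≤ dotR (chiF J) α

/-- Comparability in the Fischer order of `P`. -/
def fComp {n : ℕ} (P : Set (Fin n → ℝ)) (a b : SIdx n) : Prop :=
  fLT P (some a) (some b) ∨ fLT P (some b) (some a)

/-- One step in the comparability graph on a subset `J` of `±[n]`. -/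
def connStep {n : ℕ} (P : Set (Fin n → ℝ)) (J : Finset (SIdx n)) (a b : SIdx n) : Prop :=
  a ∈ J ∧ b ∈ J ∧ fComp P a b

/-- `J` is connected: nonempty, and any two of its elements are joined by a path inside `J`
in the comparability graph of the Fischer order of `P`. -/
def IsConnectedIdl {n : ℕ} (P : Set (Fin n → ℝ)) (J : Finset (SIdx n)) : Prop :=
  J.Nonempty ∧ ∀ a ∈ J, ∀ b ∈ J, Relation.ReflTransGen (connStep P J) a b

/-- A connected ideal of `P`. -/
def IsConnIdeal {n : ℕ} (P : Set (Fin n → ℝ)) (J : Finset (SIdx n)) : Prop :=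
  IsIdeal P J ∧ IsConnectedIdl P J

/-- Support `supp J = {|a| : a ∈ J}`. -/
def suppF {n : ℕ} (J : Finset (SIdx n)) : Finset (Fin n) := J.image Prod.snd

/-- `J` and `K` intersect nontrivially. -/
def NontrivInter {n : ℕ} (J K : Finset (SIdx n)) : Prop :=
  (suppF J ∩ suppF K).Nonempty ∧ ¬J ⊆ K ∧ ¬K ⊆ J

/-- `J` and `K` intersect trivially. -/
def TrivInter {n : ℕ} (J K : Finset (SIdx n)) : Prop := ¬NontrivInter J K

/-- A signed permutation, as an anti-symmetric bijection of `±[n]`. -/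
def IsSPerm {n : ℕ} (w : SIdx n ≃ SIdx n) : Prop := ∀ a, w (negS a) = negS (w a)

/-- Linear action of a signed permutation on `ℝ^n`, determined by `w(e_i) = v(w(+i))`. -/
def spAct {n : ℕ} (w : SIdx n ≃ SIdx n) (x : Fin n → ℝ) : Fin n → ℝ :=
  ∑ i, x i • vS (w (true, i))

/-- `w` is a linear extension of `P`: a signed permutation with `P ⊆ w(Φ⁺_{B_n})`. -/
def IsLinExt {n : ℕ} (P : Set (Fin n → ℝ)) (w : SIdx n ≃ SIdx n) : Prop :=
  IsSPerm w ∧ ∀ α ∈ P, ∃ β ∈ BnPos n, α = spAct w β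

/-- The (finite) set `𝓛(P)` of linear extensions of `P`. -/
def linExts (n : ℕ) (P : Set (Fin n → ℝ)) : Finset (SIdx n ≃ SIdx n) :=
  Finset.univ.filter (IsLinExt P)

/-- Simple roots of `Φ_{B_n}`: `α_i = e_i - e_{i+1}` for `i < n - 1`, `α_{n-1} = e_{n-1}`
(0-indexed). -/
def simpleRoot (n : ℕ) (i : Fin n) : Fin n → ℝ := fun j =>
  (if j = i then (1 : ℝ) else 0) - if (j : ℕ) = (i : ℕ) + 1 then 1 else 0

/-- `J^w_m = {w(1), …, w(m)}` (0-indexed: the images under `w` of `+1, …, +(m+1)`). -/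
def JwSet {n : ℕ} (w : SIdx n ≃ SIdx n) (m : Fin n) : Finset (SIdx n) :=
  (Finset.univ.filter (fun j : Fin n => j ≤ m)).image (fun j => w (true, j))

/-- An extensible ideal of `P`. -/
def Extensible (n : ℕ) (P : Set (Fin n → ℝ)) (J : Finset (SIdx n)) : Prop :=
  ∃ I : Finset (SIdx n), I.Nonempty ∧ Disjoint I J ∧
    IsIdeal P (J ∪ I) ∧ IsIdeal P (J ∪ I.image negS)

/-- The finite set `J_conn(P)` of connected ideals of `P`. -/
def JconnF (n : ℕ) (P : Set (Fin n → ℝ)) : Finset (Finset (SIdx n)) :=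
  Finset.univ.filter (IsConnIdeal P)

/-- Membership in `Π(P)`: an unordered pair of nontrivially intersecting connected ideals. -/
def inPiP {n : ℕ} (P : Set (Fin n → ℝ)) (p : Sym2 (Finset (SIdx n))) : Prop :=
  ∃ J K : Finset (SIdx n),
    p = s(J, K) ∧ IsConnIdeal P J ∧ IsConnIdeal P K ∧ NontrivInter J K

/-- The finite set `Π(P)` of unordered pairs of nontrivially intersecting connected ideals. -/
def PiP (n : ℕ) (P : Set (Fin n → ℝ)) : Finset (Sym2 (Finset (SIdx n))) :=
  Finset.univ.filter (inPiP P)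

/-- No connected ideal of `P` intersects two or more other connected ideals nontrivially. -/
def NoDoubleNontriv (n : ℕ) (P : Set (Fin n → ℝ)) : Prop :=
  ∀ J K K' : Finset (SIdx n), IsConnIdeal P J → IsConnIdeal P K → IsConnIdeal P K' →
    NontrivInter J K → NontrivInter J K' → K = K'

/-- The connected component of `a` inside `J` (w.r.t. the Fischer comparability graph). -/
def componentIn {n : ℕ} (P : Set (Fin n → ℝ)) (J : Finset (SIdx n)) (a : SIdx n) :
    Finset (SIdx n) :=
  J.filter (fun b => Relation.ReflTransGen (connStep P J) a b)

/-- The set of connected components of `J`. -/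
def componentsOf {n : ℕ} (P : Set (Fin n → ℝ)) (J : Finset (SIdx n)) :
    Finset (Finset (SIdx n)) :=
  J.image (componentIn P J)

/-- The signed support `supp±(f) = {sgn(f_i)·i : f_i ≠ 0}` of a vector `f ∈ ℝ^n`. -/
def suppPM {n : ℕ} (f : Fin n → ℝ) : Finset (SIdx n) :=
  Finset.univ.filter (fun a : SIdx n => if a.1 then 0 < f a.2 else f a.2 < 0)

/-- Index type for the variables `U_J`, `J` a connected ideal of `P`. -/
abbrev ConnIdx (n : ℕ) (P : Set (Fin n → ℝ)) := {J : Finset (SIdx n) // IsConnIdeal P J}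

/-- Integer signed characteristic vector, as an exponent vector for Laurent monomials. -/
def chiZ {n : ℕ} (J : Finset (SIdx n)) : Fin n →₀ ℤ :=
  Finsupp.equivFunOnFinite.symm (fun i =>
    if (true, i) ∈ J then 1 else if (false, i) ∈ J then -1 else 0)

/-- The map `φ : k[U_J : J ∈ J_conn(P)] → k[x_1^{±1}, …, x_n^{±1}]`, `U_J ↦ x^{χ_J}`. -/
def phiWt (n : ℕ) (P : Set (Fin n → ℝ)) (k : Type) [Field k] :
    MvPolynomial (ConnIdx n P) k →ₐ[k] AddMonoidAlgebra k (Fin n →₀ ℤ) :=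
  MvPolynomial.aeval (fun J => AddMonoidAlgebra.single (chiZ J.val) 1)

/-- The binomial `syz(U_J, U_K) = U_J U_K - (∏_A U_A) (∏_B U_B)`, where `A` runs over the
connected components of `J ∩ K` and `B` over the connected components of `supp±(χ_J + χ_K)`. -/
def syzPoly (n : ℕ) (P : Set (Fin n → ℝ)) (k : Type) [Field k] (J K : ConnIdx n P) :
    MvPolynomial (ConnIdx n P) k :=
  MvPolynomial.X J * MvPolynomial.X K -
    (∏ A ∈ Finset.univ.filter
        (fun A : ConnIdx n P => (A : Finset (SIdx n)) ∈ componentsOf P (J.val ∩ K.val)),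
        MvPolynomial.X A) *
      ∏ B ∈ Finset.univ.filter
        (fun B : ConnIdx n P =>
          (B : Finset (SIdx n)) ∈ componentsOf P (suppPM (chiF J.val + chiF K.val))),
        MvPolynomial.X B

/-- `θ_1, …, θ_r` is a regular sequence: the ideal it generates is proper, and each `θ_{m+1}`
is a non-zero-divisor modulo the ideal generated by `θ_1, …, θ_m`. -/
def IsRegSeq {R : Type} [CommRing R] {r : ℕ} (θ : Fin r → R) : Prop :=
  Ideal.span (Set.range θ) ≠ ⊤ ∧
    ∀ (m : ℕ) (hm : m < r) (x : R),
      θ ⟨m, hm⟩ * x ∈ Ideal.span (θ '' {j : Fin r | (j : ℕ) < m}) →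
        x ∈ Ideal.span (θ '' {j : Fin r | (j : ℕ) < m})

/-- The induced signed poset `P_A = P ∩ span_ℝ{e_i : i ∈ A}`. -/
def inducedPoset (n : ℕ) (P : Set (Fin n → ℝ)) (A : Finset (Fin n)) : Set (Fin n → ℝ) :=
  {α | α ∈ P ∧ α ∈ Submodule.span ℝ (stdB n '' (A : Set (Fin n)))}

/-- The major index of a signed permutation. -/
def majB {n : ℕ} (w : SIdx n ≃ SIdx n) : ℕ :=
  ∑ i ∈ Finset.univ.filter
      (fun i : Fin n => spAct w (simpleRoot n i) ∉ BnPos n), ((i : ℕ) + 1)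

/-- `[m]_q = 1 + q + ⋯ + q^{m-1}` in `ℤ[q]`. -/
def qInt (m : ℕ) : Polynomial ℤ := ∑ t ∈ Finset.range m, Polynomial.X ^ t

/-- The symmetric function `{J, K} ↦ ⟨x, χ_J + χ_K⟩` on unordered pairs. -/
def pairDot {n : ℕ} (x : Fin n → ℝ) : Sym2 (Finset (SIdx n)) → ℝ :=
  Sym2.lift ⟨fun J K => dotR x (chiF J + chiF K),
    fun J K => congrArg (dotR x) (add_comm (chiF J) (chiF K))⟩

/-- The symmetric function `{J, K} ↦ [|J| + |K|]_q` on unordered pairs. -/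
def pairQ {n : ℕ} : Sym2 (Finset (SIdx n)) → Polynomial ℤ :=
  Sym2.lift ⟨fun J K => qInt (J.card + K.card),
    fun J K => congrArg qInt (Nat.add_comm J.card K.card)⟩

/-- The principal order ideal `I_≤(a)` in the Fischer order restricted to `±[n]`. -/
def Ile {n : ℕ} (P : Set (Fin n → ℝ)) (a : SIdx n) : Set (SIdx n) :=
  {b | b = a ∨ fLT P (some b) (some a)}

/-- A set of signed indices is isotropic if it contains no pair `{i, -i}`. -/
def IsoSet {n : ℕ} (S : Set (SIdx n)) : Prop :=
  ∀ i : Fin n, ¬((true, i) ∈ S ∧ (false, i) ∈ S)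

/-- A covering pair of the Fischer order of `P`. -/
def CovPair {n : ℕ} (P : Set (Fin n → ℝ)) (a b : Option (SIdx n)) : Prop :=
  fLT P a b ∧ ¬∃ c : Option (SIdx n), fLT P a c ∧ fLT P c b

/-- The set of covering roots of `P`. -/
def covRoots {n : ℕ} (P : Set (Fin n → ℝ)) : Set (Fin n → ℝ) :=
  {x | ∃ a b : Option (SIdx n), CovPair P a b ∧ x = vO a - vO b}

/-- The set `J_ε = {i : ε_i = 1} ∪ {-i : ε_i = -1}` attached to a `{-1,0,1}`-vector. -/
def Jeps {n : ℕ} (ε : Fin n → ℝ) : Set (SIdx n) :=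
  {a | (a.1 = true ∧ ε a.2 = 1) ∨ (a.1 = false ∧ ε a.2 = -1)}

/-!
Necessity: (i) holds because `v(a) - v(b) = v(-b) - v(-a)`, and (ii) because `v(a) + v(b)` is the
average of the roots `2 v(a)` and `2 v(b)`.

Sufficiency: the only candidate is the set `Q` of all differences `v(a) - v(b)` with `a ≺ b`, and
the point is that a root `v(a) - v(b)` in the cone over `Q` already satisfies `a ≺ b`. An odd
function on `±[n]` extends to a linear functional on `ℝ^n`, nonnegative on the cone as soon as the
function decreases along `≺`. Oddifying the indicator of the down-set of `b` (condition (i) keeps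
it decreasing) shows `a ≺ b` or `-b ≺ b`. The same root is `v(-b) - v(-a)`, so also `a ≺ b` or
`a ≺ -a`. If `a ≺ b` failed, condition (ii) would apply to `a` and `-b` and give `a ≺ b` after all.
-/

section SignedIndices

variable {n : ℕ}

theorem negS_involutive : Function.Involutive (negS (n := n)) :=
  fun a => by simp [negS]

theorem negS_ne_self (a : SIdx n) : negS a ≠ a :=
  fun h => Bool.not_ne_self a.1 (congrArg Prod.fst h)

theorem rsgn_not (s : Bool) : rsgn (!s) = -rsgn s := by
  cases s <;> simp [rsgn]

theorem vS_negS (a : SIdx n) : vS (negS a) = -vS a := by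
  simp only [vS, negS, rsgn_not, neg_smul]

theorem vS_injective : Function.Injective (vS (n := n)) := by
  rintro ⟨s, i⟩ ⟨t, j⟩ h
  have hi : rsgn s = rsgn t * Pi.single (M := fun _ => ℝ) j 1 i := by
    simpa [vS, stdB] using congrFun h i
  obtain rfl : i = j := by
    by_contra hij
    cases s <;> simp [rsgn, hij] at hi
  cases s <;> cases t <;> simp [rsgn] at hi ⊢ <;> linarith

theorem vS_negS_sub_vS_negS (a b : SIdx n) : vS (negS b) - vS (negS a) = vS a - vS b := by
  rw [vS_negS, vS_negS, neg_sub_neg]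

theorem vS_sub_vS_mem_CnRoots {a b : SIdx n} (hab : a ≠ b) : vS a - vS b ∈ CnRoots n := by
  obtain ⟨s, i⟩ := a
  obtain ⟨t, j⟩ := b
  rcases lt_trichotomy i j with hij | rfl | hji
  · exact Or.inl ⟨i, j, hij, s, !t, by simp only [vS, rsgn_not]; module⟩
  · obtain rfl : t = !s := by simpa [eq_comm, Bool.eq_not] using hab
    exact Or.inr ⟨i, s, by simp only [vS, rsgn_not]; module⟩
  · exact Or.inl ⟨j, i, hji, !t, s, by simp only [vS, rsgn_not]; module⟩

theorem exists_eq_vS_sub_vS_of_mem_CnRoots {α : Fin n → ℝ} (hα : α ∈ CnRoots n) :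
    ∃ a b : SIdx n, a ≠ b ∧ α = vS a - vS b := by
  rcases hα with ⟨i, j, hij, s, t, rfl⟩ | ⟨i, s, rfl⟩
  · exact ⟨(s, i), (!t, j), fun h => hij.ne (congrArg Prod.snd h), by
      simp only [vS, rsgn_not]; module⟩
  · exact ⟨(s, i), (!s, i), by simp, by simp only [vS, rsgn_not]; module⟩

theorem linearCombination_vS {M : Type*} [AddCommGroup M] [Module ℝ M] {F : SIdx n → M}
    (hF : ∀ c, F (negS c) = -F c) (c : SIdx n) :
    Fintype.linearCombination ℝ (fun i => F (true, i)) (vS c) = F c := by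
  obtain ⟨s, i⟩ := c
  have hFi : F (false, i) = -F (true, i) := hF (true, i)
  cases s <;> simp [vS, rsgn, stdB, hFi]

end SignedIndices

section NonnegativeCombinations

variable {n : ℕ} {S : Set (Fin n → ℝ)}

theorem subset_nnSpan : S ⊆ nnSpan S :=
  fun x hx => ⟨1, fun _ => 1, fun _ => x, by simp, fun _ => hx, by simp⟩

theorem smul_add_smul_mem_nnSpan {x y : Fin n → ℝ} (hx : x ∈ S) (hy : y ∈ S) {s t : ℝ}
    (hs : 0 ≤ s) (ht : 0 ≤ t) : s • x + t • y ∈ nnSpan S :=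
  ⟨2, ![s, t], ![x, y], by simp [Fin.forall_fin_two, hs, ht],
    by simp [Fin.forall_fin_two, hx, hy], by simp⟩

theorem map_nonneg_of_mem_nnSpan (f : (Fin n → ℝ) →ₗ[ℝ] ℝ) (hf : ∀ x ∈ S, 0 ≤ f x)
    {x : Fin n → ℝ} (hx : x ∈ nnSpan S) : 0 ≤ f x := by
  obtain ⟨r, c, β, hc, hβ, rfl⟩ := hx
  simp only [map_sum, map_smul, smul_eq_mul]
  exact Finset.sum_nonneg fun m _ => mul_nonneg (hc m) (hf _ (hβ m))

end NonnegativeCombinations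

theorem IsCnSignedPoset.vS_sub_vS_negS_mem {n : ℕ} {Q : Set (Fin n → ℝ)}
    (hQ : IsCnSignedPoset n Q) {a b : SIdx n} (ha : vS a - vS (negS a) ∈ Q)
    (hb : vS b - vS (negS b) ∈ Q) : vS a - vS (negS b) ∈ Q := by
  obtain ⟨-, hanti, hclosed⟩ := hQ
  have hab : a ≠ negS b := by
    rintro rfl
    rw [negS_involutive b, ← neg_sub] at ha
    exact hanti _ hb ha
  have average : vS a - vS (negS b) =
      (1 / 2 : ℝ) • (vS a - vS (negS a)) + (1 / 2 : ℝ) • (vS b - vS (negS b)) := by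
    simp only [vS_negS]
    module
  refine hclosed _ (vS_sub_vS_mem_CnRoots hab) ?_
  rw [average]
  exact smul_add_smul_mem_nnSpan ha hb (by norm_num) (by norm_num)

/-- The differences `v(a) - v(b)` with `a ≺ b`: the candidate signed poset of the relation `≺`. -/
def relationRoots {n : ℕ} (prec : SIdx n → SIdx n → Prop) : Set (Fin n → ℝ) :=
  {x | ∃ a b : SIdx n, prec a b ∧ x = vS a - vS b}

/-- The odd part `c ↦ 1_L(c) - 1_L(-c)` (up to a factor `2`) of the indicator of `L ⊆ ±[n]`; as an
odd function it extends to a linear functional on `ℝ^n`. -/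
def oddIndicator {n : ℕ} (L : Set (SIdx n)) (c : SIdx n) : ℝ :=
  L.indicator 1 c - L.indicator 1 (negS c)

section Separation

variable {n : ℕ} {prec : SIdx n → SIdx n → Prop}

theorem oddIndicator_negS (L : Set (SIdx n)) (c : SIdx n) :
    oddIndicator L (negS c) = -oddIndicator L c := by
  simp only [oddIndicator, negS_involutive c, neg_sub]

theorem oddIndicator_le_oddIndicator (hneg : ∀ a b, prec a b → prec (negS b) (negS a))
    {L : Set (SIdx n)} (hL : ∀ c d, prec c d → d ∈ L → c ∈ L) {c d : SIdx n} (hcd : prec c d) :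
    oddIndicator L d ≤ oddIndicator L c := by
  have indicator_le {x y : SIdx n} (hxy : prec x y) :
      L.indicator (1 : SIdx n → ℝ) y ≤ L.indicator 1 x :=
    Set.indicator_apply_le'
      (fun hy => by rw [Set.indicator_of_mem (hL _ _ hxy hy), Pi.one_apply, Pi.one_apply])
      (fun _ => Set.indicator_nonneg (fun _ _ => zero_le_one) x)
  exact sub_le_sub (indicator_le hcd) (indicator_le (hneg _ _ hcd))

theorem le_of_vS_sub_vS_mem_nnSpan {F : SIdx n → ℝ} (hodd : ∀ c, F (negS c) = -F c)
    (hF : ∀ c d, prec c d → F d ≤ F c) {a b : SIdx n}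
    (h : vS a - vS b ∈ nnSpan (relationRoots prec)) : F b ≤ F a := by
  have map_vS_sub_vS (c d : SIdx n) :
      Fintype.linearCombination ℝ (fun i => F (true, i)) (vS c - vS d) = F c - F d := by
    rw [map_sub, linearCombination_vS hodd, linearCombination_vS hodd]
  rw [← sub_nonneg, ← map_vS_sub_vS]
  refine map_nonneg_of_mem_nnSpan _ ?_ h
  rintro _ ⟨c, d, hcd, rfl⟩
  rw [map_vS_sub_vS, sub_nonneg]
  exact hF c d hcd

theorem mem_or_negS_mem_of_vS_sub_vS_mem_nnSpan
    (hneg : ∀ a b, prec a b → prec (negS b) (negS a))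
    {L : Set (SIdx n)} (hL : ∀ c d, prec c d → d ∈ L → c ∈ L) {a b : SIdx n} (hb : b ∈ L)
    (h : vS a - vS b ∈ nnSpan (relationRoots prec)) : a ∈ L ∨ negS b ∈ L := by
  by_contra! ⟨haL, hnegb⟩
  have hle : oddIndicator L b ≤ oddIndicator L a :=
    le_of_vS_sub_vS_mem_nnSpan (oddIndicator_negS L)
      (fun _ _ => oddIndicator_le_oddIndicator hneg hL) h
  have hFb : oddIndicator L b = 1 := by simp [oddIndicator, hb, hnegb]
  have hFa : oddIndicator L a ≤ 0 := by
    rw [oddIndicator, Set.indicator_of_notMem haL, zero_sub, neg_nonpos]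
    exact Set.indicator_nonneg (fun _ _ => zero_le_one) _
  linarith

theorem prec_or_negS_prec_of_vS_sub_vS_mem_nnSpan
    (htrans : ∀ a b c, prec a b → prec b c → prec a c)
    (hneg : ∀ a b, prec a b → prec (negS b) (negS a)) {a b : SIdx n} (hab : a ≠ b)
    (h : vS a - vS b ∈ nnSpan (relationRoots prec)) : prec a b ∨ prec (negS b) b := by
  have downset_closed (c d : SIdx n) (hcd : prec c d) : d = b ∨ prec d b → c = b ∨ prec c b := by
    rintro (rfl | hdb)
    · exact Or.inr hcd
    · exact Or.inr (htrans _ _ _ hcd hdb)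
  simpa [hab, negS_ne_self] using
    mem_or_negS_mem_of_vS_sub_vS_mem_nnSpan hneg (L := {c | c = b ∨ prec c b}) downset_closed
      (Or.inl rfl) h

theorem prec_of_vS_sub_vS_mem_nnSpan
    (htrans : ∀ a b c, prec a b → prec b c → prec a c)
    (hneg : ∀ a b, prec a b → prec (negS b) (negS a))
    (hself : ∀ a b, prec a (negS a) → prec b (negS b) → prec a (negS b))
    {a b : SIdx n} (hab : a ≠ b) (h : vS a - vS b ∈ nnSpan (relationRoots prec)) :
    prec a b := by
  rcases prec_or_negS_prec_of_vS_sub_vS_mem_nnSpan htrans hneg hab h with hprec | hb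
  · exact hprec
  have h' : vS (negS b) - vS (negS a) ∈ nnSpan (relationRoots prec) := by
    rwa [vS_negS_sub_vS_negS]
  rcases prec_or_negS_prec_of_vS_sub_vS_mem_nnSpan htrans hneg
    (negS_involutive.injective.ne hab.symm) h' with hprec | ha
  · simpa only [negS_involutive _] using hneg _ _ hprec
  · rw [negS_involutive] at ha
    simpa only [negS_involutive b] using hself a (negS b) ha (by rwa [negS_involutive])

end Separation

section RelationRoots

variable {n : ℕ} {prec : SIdx n → SIdx n → Prop}

theorem vS_sub_vS_mem_relationRoots_iff (hirr : ∀ a, ¬prec a a)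
    (htrans : ∀ a b c, prec a b → prec b c → prec a c)
    (hneg : ∀ a b, prec a b → prec (negS b) (negS a))
    (hself : ∀ a b, prec a (negS a) → prec b (negS b) → prec a (negS b)) {a b : SIdx n} :
    vS a - vS b ∈ relationRoots prec ↔ prec a b := by
  refine ⟨fun h => ?_, fun hab => ⟨a, b, hab, rfl⟩⟩
  have hab : a ≠ b := by
    rintro rfl
    obtain ⟨c, d, hcd, hzero⟩ := h
    rw [sub_self] at hzero
    obtain rfl : c = d := vS_injective (sub_eq_zero.mp hzero.symm)
    exact hirr c hcd
  exact prec_of_vS_sub_vS_mem_nnSpan htrans hneg hself hab (subset_nnSpan h)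

theorem isCnSignedPoset_relationRoots (hirr : ∀ a, ¬prec a a)
    (htrans : ∀ a b c, prec a b → prec b c → prec a c)
    (hneg : ∀ a b, prec a b → prec (negS b) (negS a))
    (hself : ∀ a b, prec a (negS a) → prec b (negS b) → prec a (negS b)) :
    IsCnSignedPoset n (relationRoots prec) := by
  refine ⟨?subset, ?antisymm, ?closed⟩
  case subset =>
    rintro _ ⟨a, b, hab, rfl⟩
    exact vS_sub_vS_mem_CnRoots fun h => hirr b (h ▸ hab)
  case antisymm =>
    rintro _ ⟨a, b, hab, rfl⟩ hba
    rw [neg_sub, vS_sub_vS_mem_relationRoots_iff hirr htrans hneg hself] at hba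
    exact hirr a (htrans _ _ _ hab hba)
  case closed =>
    intro α hα hspan
    obtain ⟨a, b, hab, rfl⟩ := exists_eq_vS_sub_vS_of_mem_CnRoots hα
    exact ⟨a, b, prec_of_vS_sub_vS_mem_nnSpan htrans hneg hself hab hspan, rfl⟩

end RelationRoots

theorem statement_11 (n : ℕ) (hn : 1 ≤ n) (prec : SIdx n → SIdx n → Prop)
    (hirr : ∀ a, ¬prec a a)
    (htrans : ∀ a b c, prec a b → prec b c → prec a c) :
    (∃ Q : Set (Fin n → ℝ), IsCnSignedPoset n Q ∧
        ∀ a b : SIdx n, prec a b ↔ vS a - vS b ∈ Q) ↔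
      ((∀ a b : SIdx n, prec a b → prec (negS b) (negS a)) ∧
        ∀ a b : SIdx n, prec a (negS a) → prec b (negS b) →
          prec a (negS b) ∧ prec b (negS a)) := by
  constructor
  · rintro ⟨Q, hQ, hprec⟩
    simp only [hprec, vS_negS_sub_vS_negS]
    exact ⟨fun _ _ hab => hab,
      fun _ _ ha hb => ⟨hQ.vS_sub_vS_negS_mem ha hb, hQ.vS_sub_vS_negS_mem hb ha⟩⟩
  · rintro ⟨hneg, hself⟩
    have hself_left (a b : SIdx n) (ha : prec a (negS a)) (hb : prec b (negS b)) :
        prec a (negS b) := (hself a b ha hb).1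
    exact ⟨relationRoots prec, isCnSignedPoset_relationRoots hirr htrans hneg hself_left,
      fun _ _ => (vS_sub_vS_mem_relationRoots_iff hirr htrans hneg hself_left).symm⟩
end
end

section
/- Let P ⊆ Φ_{B_n} be a signed poset and ε ∈ {−1,0,1}^n; let J_ε = {i : ε_i = 1} ∪ {−i : ε_i = −1} ⊆ ±[n] (so J_ε contains no pair {i,−i}). Then ⟨ε, α⟩ ≥ 0 for all α ∈ P if and only if J_ε is an isotropic order ideal of the Fischer order of P, that is: whenever b ∈ J_ε and a ∈ ±[n] satisfies a < b, then a ∈ J_ε; and there is no b ∈ J_ε with 0 < b. -/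
open scoped Classical

noncomputable section

/-!
Extend `ε` to the odd function `a ↦ ⟨ε, v(a)⟩` on `±[n] ∪ {0}`, with values in `{-1, 0, 1}`; then
`J_ε` is the set where it equals `1`. As every root is a difference `v(a) - v(b)`, the vector `ε` is
nonnegative on `P` iff this function is antitone for the Fischer order. Since `a ↦ -a` reverses the
Fischer order, a failure of antitonicity at the step from `0` to `-1` is mirrored by one at the step
from `1` to `0`, so it suffices to test antitonicity on the level set of `1`, which is the order
ideal condition. That `0` takes the value `0` is what forbids `0 < b` with `b ∈ J_ε`.
-/

section OddFunction

variable {X R : Type*} [Ring R] [PartialOrder R] [IsOrderedRing R] [Nontrivial R]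

theorem antitone_iff_level_one_of_odd {r : X → X → Prop} {neg : X → X} {f : X → R}
    (hr : ∀ a b, r a b → r (neg b) (neg a)) (hodd : ∀ a, f (neg a) = -f a)
    (hf : ∀ a, f a = -1 ∨ f a = 0 ∨ f a = 1) :
    (∀ a b, r a b → f b ≤ f a) ↔ ∀ a b, r a b → f b = 1 → f a = 1 := by
  have neg_one_le_one : (-1 : R) ≤ 1 := neg_le_self zero_le_one
  have neg_one_le (a : X) : -1 ≤ f a := by
    rcases hf a with h | h | h <;> simp [h, neg_one_le_one]
  have le_one (a : X) : f a ≤ 1 := by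
    rcases hf a with h | h | h <;> simp [h, neg_one_le_one]
  refine ⟨fun hanti a b hab hb ↦ (le_one a).antisymm (hb ▸ hanti a b hab), ?_⟩
  intro hlevel a b hab
  rcases hf b with hb | hb | hb
  · exact hb ▸ neg_one_le a
  · rcases hf a with ha | ha | ha
    · have hneg : f (neg b) = 1 := hlevel _ _ (hr a b hab) (by rw [hodd, ha, neg_neg])
      simp [hodd, hb] at hneg
    · rw [hb, ha]
    · exact hb.trans_le (ha ▸ zero_le_one)
  · rw [hb, hlevel a b hab hb]

end OddFunction

section FischerOrder

variable {n : ℕ} {P : Set (Fin n → ℝ)} {ε : Fin n → ℝ}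

theorem dotR_eq_dotProduct (x y : Fin n → ℝ) : dotR x y = x ⬝ᵥ y := rfl

theorem dotR_vS (ε : Fin n → ℝ) (a : SIdx n) : dotR ε (vS a) = rsgn a.1 * ε a.2 := by
  rw [dotR_eq_dotProduct, vS, stdB, dotProduct_smul, dotProduct_single_one, smul_eq_mul]

theorem dotR_vO_none (ε : Fin n → ℝ) : dotR ε (vO none) = 0 :=
  dotProduct_zero ε

theorem vO_negO (a : Option (SIdx n)) : vO (negO a) = -vO a := by
  rcases a with _ | ⟨_ | _, i⟩ <;> simp [vO, negO, vS, negS, rsgn]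

theorem dotR_vO_negO (ε : Fin n → ℝ) (a : Option (SIdx n)) :
    dotR ε (vO (negO a)) = -dotR ε (vO a) := by
  rw [vO_negO, dotR_eq_dotProduct, dotProduct_neg, dotR_eq_dotProduct]

theorem negO_negO (a : Option (SIdx n)) : negO (negO a) = a := by
  rcases a with _ | a <;> simp [negO, negS]

theorem fLT_negO_of_fLT {a b : Option (SIdx n)} (hab : fLT P a b) :
    fLT P (negO b) (negO a) := by
  rcases hab with hab | ⟨ha, rfl, hPa⟩
  · left
    rwa [vO_negO, vO_negO, neg_sub_neg]
  · right
    rw [negO_negO]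
    exact ⟨ha, rfl, hPa⟩

theorem exists_vO_sub_vO_of_mem_BnRoots {α : Fin n → ℝ} (hα : α ∈ BnRoots n) :
    ∃ a b : Option (SIdx n), α = vO a - vO b := by
  rcases hα with ⟨i, j, -, s, t, rfl⟩ | ⟨i, s, rfl⟩
  · refine ⟨some (s, i), negO (some (t, j)), ?_⟩
    rw [vO_negO, sub_neg_eq_add]
    rfl
  · exact ⟨some (s, i), none, (sub_zero _).symm⟩

theorem nonneg_iff_dotR_vO_antitone (hP : ∀ α ∈ P, ∃ a b : Option (SIdx n), α = vO a - vO b) :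
    (∀ α ∈ P, 0 ≤ dotR ε α) ↔ ∀ a b, fLT P a b → dotR ε (vO b) ≤ dotR ε (vO a) := by
  have dotR_vO_sub (a b : Option (SIdx n)) :
      dotR ε (vO a - vO b) = dotR ε (vO a) - dotR ε (vO b) := dotProduct_sub ε _ _
  constructor
  · rintro hnonneg a b (hab | ⟨-, rfl, hPa⟩)
    · exact sub_nonneg.mp (dotR_vO_sub a b ▸ hnonneg _ hab)
    · rw [dotR_vO_negO]
      exact neg_le_self (hnonneg _ hPa)
  · intro hanti α hα
    obtain ⟨a, b, rfl⟩ := hP α hα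
    rw [dotR_vO_sub, sub_nonneg]
    exact hanti a b (Or.inl hα)

theorem dotR_vO_eq_neg_one_or_zero_or_one (hε : ∀ i, ε i = -1 ∨ ε i = 0 ∨ ε i = 1) :
    ∀ a, dotR ε (vO a) = -1 ∨ dotR ε (vO a) = 0 ∨ dotR ε (vO a) = 1
  | none => Or.inr (Or.inl (dotR_vO_none ε))
  | some (s, i) => by
    rw [vO, dotR_vS]
    rcases hε i with h | h | h <;> cases s <;> simp [rsgn, h]

theorem mem_Jeps_iff_dotR_vO_eq_one (a : SIdx n) : a ∈ Jeps ε ↔ dotR ε (vO (some a)) = 1 := by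
  rw [vO, dotR_vS]
  rcases a with ⟨_ | _, i⟩ <;> simp [Jeps, rsgn, neg_eq_iff_eq_neg]

theorem level_one_iff_Jeps_isotropic_ideal :
    (∀ a b, fLT P a b → dotR ε (vO b) = 1 → dotR ε (vO a) = 1) ↔
      ((∀ b ∈ Jeps ε, ∀ a : SIdx n, fLT P (some a) (some b) → a ∈ Jeps ε) ∧
        ¬∃ b ∈ Jeps ε, fLT P none (some b)) := by
  simp only [mem_Jeps_iff_dotR_vO_eq_one]
  constructor
  · intro hlevel
    refine ⟨fun b hb a hab ↦ hlevel _ _ hab hb, ?_⟩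
    rintro ⟨b, hb, h0b⟩
    exact zero_ne_one ((dotR_vO_none ε).symm.trans (hlevel _ _ h0b hb))
  · rintro ⟨hideal, hzero⟩ (_ | a) (_ | b) hab hb
    · exact hb
    · exact absurd ⟨b, hb, hab⟩ hzero
    · exact absurd ((dotR_vO_none ε).symm.trans hb) zero_ne_one
    · exact hideal b hb a hab

-- The vectors `v(a) - v(b)` are `0` and all roots of types `B_n` and `C_n`: `2 e_i = v(i) - v(-i)`.
theorem statement_12_general (hP : ∀ α ∈ P, ∃ a b : Option (SIdx n), α = vO a - vO b)
    (hε : ∀ i, ε i = -1 ∨ ε i = 0 ∨ ε i = 1) :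
    (∀ α ∈ P, 0 ≤ dotR ε α) ↔
      ((∀ b ∈ Jeps ε, ∀ a : SIdx n, fLT P (some a) (some b) → a ∈ Jeps ε) ∧
        ¬∃ b ∈ Jeps ε, fLT P none (some b)) :=
  calc
    _ ↔ ∀ a b, fLT P a b → dotR ε (vO b) ≤ dotR ε (vO a) := nonneg_iff_dotR_vO_antitone hP
    _ ↔ ∀ a b, fLT P a b → dotR ε (vO b) = 1 → dotR ε (vO a) = 1 :=
      antitone_iff_level_one_of_odd (fun _ _ ↦ fLT_negO_of_fLT) (dotR_vO_negO ε)
        (dotR_vO_eq_neg_one_or_zero_or_one hε)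
    _ ↔ _ := level_one_iff_Jeps_isotropic_ideal

end FischerOrder

theorem statement_12 (n : ℕ) (hn : 1 ≤ n) (P : Set (Fin n → ℝ)) (hP : IsSignedPoset n P)
    (ε : Fin n → ℝ) (hε : ∀ i, ε i = -1 ∨ ε i = 0 ∨ ε i = 1) :
    (∀ α ∈ P, 0 ≤ dotR ε α) ↔
      ((∀ b ∈ Jeps ε, ∀ a : SIdx n, fLT P (some a) (some b) → a ∈ Jeps ε) ∧
        ¬∃ b ∈ Jeps ε, fLT P none (some b)) :=
  statement_12_general (fun _ hα ↦ exists_vO_sub_vO_of_mem_BnRoots (hP.1 hα)) hε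
end
end
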